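/- Let m : ℕ with m ≥ 1, let a ∈ ℂ with a ≠ 0, and let y₁ ∈ ℂ⟦T⟧ with constant coefficient 0. Set y := T^(2m)·(C(a) + y₁) (so ord y = 2m), x := T^m, and E := C(a)·T^(2m)·(C(a) + y₁)² − y₁, and assume E ≠ 0. Then, with v := ((Dx)² + (Dy)²)·((Dx)·(D³y) − (D³x)·(Dy)) + 3·((Dx)·(D²x) + (Dy)·(D²y))·((D²x)·(Dy) − (Dx)·(D²y)), one has ord v + 6 = 5m + ord E (an equality in ℕ∞, both sides finite). -/

import Mathlib

open PowerSeries

/-- The formal derivative on `ℂ⟦T⟧`. -/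
noncomputable def D : PowerSeries ℂ → PowerSeries ℂ := fun f => PowerSeries.derivative ℂ f

/-- The vertex series of the parametrised curve `(x, y)`:
`v = (x'² + y'²)(x'y''' − x'''y') + 3(x'x'' + y'y'')(x''y' − x'y'')`. -/
noncomputable def vser (x y : PowerSeries ℂ) : PowerSeries ℂ :=
  ((D x) ^ 2 + (D y) ^ 2) * (D x * D (D (D y)) - D (D (D x)) * D y) +
    3 * (D x * D (D x) + D y * D (D y)) * (D (D x) * D y - D x * D (D y))


/-!
Up to an arc-length factor and first-order terms, the third derivative along the curve `(x, y)` is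
the operator `L = (x'² + y'²) ∂³ - 3 (x'x'' + y'y'') ∂²`, and the vertex series is the determinant
`v = x' L y - y' L x`. If `F = a (x² + y²) + b x + c y + e` is the equation of a circle, then
`F' = F_x x' + F_y y'`, and `L F = F_x L x + F_y L y` holds as well: the contributions of the second
derivatives of `a (x² + y²)` to the two parts of `L` cancel. Eliminating `F_x` gives
`F_y v = x' L F - L x F'`, so the contact of the curve with a circle controls the order of `v`.
Replacing `d/dT` by `T d/dT` multiplies `v` by `T⁶` and makes initial terms computable: if
`x ~ α T^m`, `ord y > m` and `F ~ β T^N`, then the right-hand side starts with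
`m³ α³ β N (N - m) (N - 2m) T^(3m + N)`. The exceptional case is the circle `a (x² + y²) = y`, for
which `F = T^(2m) E`.
-/

section Derivation

variable {R A : Type*} [CommRing R] [CommRing A] [Algebra R A]

/-- The operator `(x'² + y'²) ∂³ - 3 (x'x'' + y'y'') ∂²` attached to the curve `(x, y)`: up to a
power of the speed and a multiple of `∂`, the third derivative with respect to arc length. -/
def arcThirdDeriv (δ : Derivation R A A) (x y f : A) : A :=
  (δ x ^ 2 + δ y ^ 2) * δ (δ (δ f)) - 3 * ((δ x * δ (δ x) + δ y * δ (δ y)) * δ (δ f))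

/-- The vertex series of the curve `(x, y)` with respect to an arbitrary derivation; `vser` is the
case `δ = d/dT` over `ℂ`. -/
def vertexForm (δ : Derivation R A A) (x y : A) : A :=
  δ x * arcThirdDeriv δ x y y - δ y * arcThirdDeriv δ x y x

/-- The equation of the circle `a (x² + y²) + b x + c y + e = 0` (a line if `a = 0`), evaluated
along the curve `(x, y)`. -/
def circleForm (a b c e : R) (x y : A) : A :=
  algebraMap R A a * (x ^ 2 + y ^ 2) + algebraMap R A b * x + algebraMap R A c * y +
    algebraMap R A e

theorem vertexForm_smul (g : A) (δ : Derivation R A A) (x y : A) :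
    vertexForm (g • δ) x y = g ^ 6 * vertexForm δ x y := by
  simp only [vertexForm, arcThirdDeriv, Derivation.smul_apply, smul_eq_mul, Derivation.leibniz,
    map_add]
  ring

theorem derivation_circleForm (δ : Derivation R A A) (a b c e : R) (x y : A) :
    δ (circleForm a b c e x y) =
      (2 * algebraMap R A a * x + algebraMap R A b) * δ x +
        (2 * algebraMap R A a * y + algebraMap R A c) * δ y := by
  simp only [circleForm, pow_two, map_add, Derivation.leibniz, Derivation.map_algebraMap,
    smul_eq_mul]
  ring

theorem arcThirdDeriv_circleForm (δ : Derivation R A A) (a b c e : R) (x y : A) :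
    arcThirdDeriv δ x y (circleForm a b c e x y) =
      (2 * algebraMap R A a * x + algebraMap R A b) * arcThirdDeriv δ x y x +
        (2 * algebraMap R A a * y + algebraMap R A c) * arcThirdDeriv δ x y y := by
  have hδ2 : δ (2 : A) = 0 := mod_cast δ.map_natCast 2
  simp only [arcThirdDeriv, derivation_circleForm, map_add, Derivation.leibniz,
    Derivation.map_algebraMap, hδ2, smul_eq_mul, map_zero]
  ring

theorem mul_vertexForm_eq_of_circleForm (δ : Derivation R A A) (a b c e : R) (x y : A) :
    (2 * algebraMap R A a * y + algebraMap R A c) * vertexForm δ x y =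
      δ x * arcThirdDeriv δ x y (circleForm a b c e x y) -
        arcThirdDeriv δ x y x * δ (circleForm a b c e x y) := by
  rw [arcThirdDeriv_circleForm, derivation_circleForm, vertexForm]
  ring

end Derivation

section InitialTerm

variable {R : Type*} [CommRing R]

/-- `f = c T^n + O(T^(n + 1))`. The coefficient `c` may vanish, so that terms of higher order can be
absorbed and sums need no case distinction. -/
def HasInitialTerm (f : R⟦X⟧) (n : ℕ) (c : R) : Prop :=
  ∃ u : R⟦X⟧, f = X ^ n * u ∧ constantCoeff u = c

variable {f g : R⟦X⟧} {n k : ℕ} {c d : R}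

theorem hasInitialTerm_coeff_of_X_pow_dvd (h : X ^ n ∣ f) : HasInitialTerm f n (coeff n f) := by
  obtain ⟨u, rfl⟩ := h
  exact ⟨u, rfl, by simp [coeff_X_pow_mul']⟩

theorem hasInitialTerm_zero_of_lt_order (h : n < f.order) : HasInitialTerm f n 0 := by
  have hdvd : X ^ n ∣ f := X_pow_dvd_iff.2 fun i hi =>
    coeff_of_lt_order i ((Nat.cast_lt.2 hi).trans h)
  simpa only [coeff_of_lt_order n h] using hasInitialTerm_coeff_of_X_pow_dvd hdvd

theorem exists_hasInitialTerm_of_order_eq (h : f.order = n) :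
    ∃ c ≠ 0, HasInitialTerm f n c := by
  obtain ⟨hn, hlt⟩ := order_eq_nat.1 h
  exact ⟨_, hn, hasInitialTerm_coeff_of_X_pow_dvd (X_pow_dvd_iff.2 hlt)⟩

namespace HasInitialTerm

theorem order_eq (hf : HasInitialTerm f n c) (hc : c ≠ 0) : f.order = n := by
  obtain ⟨u, rfl, rfl⟩ := hf
  refine order_eq_nat.2 ⟨by simpa [coeff_X_pow_mul'] using hc, fun i hi => ?_⟩
  simp [coeff_X_pow_mul', hi.not_ge]

theorem add (hf : HasInitialTerm f n c) (hg : HasInitialTerm g n d) :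
    HasInitialTerm (f + g) n (c + d) := by
  obtain ⟨u, rfl, rfl⟩ := hf
  obtain ⟨v, rfl, rfl⟩ := hg
  exact ⟨u + v, by ring, map_add ..⟩

theorem sub (hf : HasInitialTerm f n c) (hg : HasInitialTerm g n d) :
    HasInitialTerm (f - g) n (c - d) := by
  obtain ⟨u, rfl, rfl⟩ := hf
  obtain ⟨v, rfl, rfl⟩ := hg
  exact ⟨u - v, by ring, map_sub ..⟩

theorem mul (hf : HasInitialTerm f n c) (hg : HasInitialTerm g k d) :
    HasInitialTerm (f * g) (n + k) (c * d) := by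
  obtain ⟨u, rfl, rfl⟩ := hf
  obtain ⟨v, rfl, rfl⟩ := hg
  exact ⟨u * v, by ring, map_mul ..⟩

theorem mul_left (hf : HasInitialTerm f n c) (g : R⟦X⟧) :
    HasInitialTerm (g * f) n (constantCoeff g * c) := by
  obtain ⟨u, rfl, rfl⟩ := hf
  exact ⟨g * u, by ring, map_mul ..⟩

end HasInitialTerm

variable (R) in
/-- The derivation `T d/dT`, which preserves initial degrees. -/
noncomputable def eulerDerivation : Derivation R R⟦X⟧ R⟦X⟧ := (X : R⟦X⟧) • derivative R

theorem eulerDerivation_X_pow_mul (n : ℕ) (u : R⟦X⟧) :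
    eulerDerivation R (X ^ n * u) = X ^ n * ((n : R⟦X⟧) * u + X * derivative R u) := by
  cases n with
  | zero => simp [eulerDerivation]
  | succ n =>
    simp only [eulerDerivation, Derivation.smul_apply, Derivation.leibniz, Derivation.leibniz_pow,
      derivative_X, smul_eq_mul, nsmul_eq_mul, Nat.add_sub_cancel]
    ring

theorem HasInitialTerm.map_eulerDerivation (hf : HasInitialTerm f n c) :
    HasInitialTerm (eulerDerivation R f) n (n * c) := by
  obtain ⟨u, rfl, rfl⟩ := hf
  exact ⟨_, eulerDerivation_X_pow_mul n u, by simp⟩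

end InitialTerm

section Order

variable {R : Type*} [CommRing R] {x y f : R⟦X⟧} {m k : ℕ} {α β : R}

theorem HasInitialTerm.map_arcThirdDeriv (hx : HasInitialTerm x m α) (hy : HasInitialTerm y m 0)
    (hf : HasInitialTerm f k β) :
    HasInitialTerm (arcThirdDeriv (eulerDerivation R) x y f) (m + m + k)
      (m ^ 2 * α ^ 2 * (k ^ 2 * (k - 3 * m)) * β) := by
  have hx' := hx.map_eulerDerivation
  have hy' := hy.map_eulerDerivation
  have hf'' := hf.map_eulerDerivation.map_eulerDerivation
  have hspeed := (hx'.mul hx').add (hy'.mul hy')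
  have hhalf := (hx'.mul hx'.map_eulerDerivation).add (hy'.mul hy'.map_eulerDerivation)
  convert (hspeed.mul hf''.map_eulerDerivation).sub ((hhalf.mul hf'').mul_left 3) using 1
  · simp only [arcThirdDeriv, pow_two]
  · simp only [map_ofNat]
    ring

theorem HasInitialTerm.mul_arcThirdDeriv_sub (hx : HasInitialTerm x m α)
    (hy : HasInitialTerm y m 0) (hf : HasInitialTerm f k β) :
    HasInitialTerm
      (eulerDerivation R x * arcThirdDeriv (eulerDerivation R) x y f -
        arcThirdDeriv (eulerDerivation R) x y x * eulerDerivation R f)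
      (3 * m + k) (m ^ 3 * α ^ 3 * (k * (k - m) * (k - 2 * m)) * β) := by
  have hleft := hx.map_eulerDerivation.mul (hx.map_arcThirdDeriv hy hf)
  have hright := (hx.map_arcThirdDeriv hy hx).mul hf.map_eulerDerivation
  rw [show m + (m + m + k) = m + m + m + k by ring] at hleft
  convert hleft.sub hright using 1 <;> ring

variable [IsDomain R]

theorem order_vertexForm_eulerDerivation (x y : R⟦X⟧) :
    (vertexForm (eulerDerivation R) x y).order = (vertexForm (derivative R) x y).order + 6 := by
  rw [eulerDerivation, vertexForm_smul, order_mul, order_X_pow, add_comm]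
  rfl

theorem order_vertexForm_add_six_eq_order_sub (hy : constantCoeff y = 0) (a b : R) {c : R}
    (hc : c ≠ 0) (e : R) :
    (vertexForm (derivative R) x y).order + 6 =
      (eulerDerivation R x * arcThirdDeriv (eulerDerivation R) x y (circleForm a b c e x y) -
        arcThirdDeriv (eulerDerivation R) x y x *
          eulerDerivation R (circleForm a b c e x y)).order := by
  have hinit : HasInitialTerm (2 * algebraMap R R⟦X⟧ a * y + algebraMap R R⟦X⟧ c) 0 c :=
    ⟨_, by rw [pow_zero, one_mul], by simp [hy]⟩
  rw [← mul_vertexForm_eq_of_circleForm, order_mul, hinit.order_eq hc, Nat.cast_zero, zero_add,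
    order_vertexForm_eulerDerivation]

variable [CharZero R]

theorem order_vertexForm_add_six_eq_add_order_circleForm {a b c e : R} (hm : m ≠ 0)
    (hx : x.order = m) (hy : m < y.order) (hc : c ≠ 0)
    (hF₀ : (circleForm a b c e x y).order ≠ 0) (hF₁ : (circleForm a b c e x y).order ≠ m)
    (hF₂ : (circleForm a b c e x y).order ≠ (2 * m : ℕ)) :
    (vertexForm (derivative R) x y).order + 6
      = ((3 * m : ℕ) : ℕ∞) + (circleForm a b c e x y).order := by
  have hy₀ : constantCoeff y = 0 := order_ne_zero_iff_constCoeff_eq_zero.1 (ne_bot_of_gt hy)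
  rw [order_vertexForm_add_six_eq_order_sub hy₀ a b hc e]
  generalize circleForm a b c e x y = F at *
  rcases eq_or_ne F 0 with rfl | hF
  · simp [arcThirdDeriv]
  obtain ⟨N, hN⟩ : ∃ N : ℕ, F.order = N := ⟨_, (coe_toNat_order hF).symm⟩
  rw [hN, Nat.cast_ne_zero] at hF₀
  rw [hN, Ne, Nat.cast_inj] at hF₁ hF₂
  obtain ⟨α, hα, hxα⟩ := exists_hasInitialTerm_of_order_eq hx
  obtain ⟨β, hβ, hFβ⟩ := exists_hasInitialTerm_of_order_eq hN
  have hcoeff : (m : R) ^ 3 * α ^ 3 * (N * (N - m) * (N - 2 * m)) * β ≠ 0 := by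
    have hNm : (N : R) - m ≠ 0 := sub_ne_zero.2 (mod_cast hF₁)
    have hN2m : (N : R) - 2 * m ≠ 0 := sub_ne_zero.2 (mod_cast hF₂)
    simp [hm, hα, hβ, hF₀, hNm, hN2m]
  rw [(hxα.mul_arcThirdDeriv_sub (hasInitialTerm_zero_of_lt_order hy) hFβ).order_eq hcoeff, hN,
    Nat.cast_add]

theorem order_vertex_series_exceptional_general (hm : 1 ≤ m) (a : R) (y₁ : R⟦X⟧)
    (hy₁ : constantCoeff y₁ = 0) :
    (vertexForm (derivative R) (X ^ m) (X ^ (2 * m) * (C a + y₁))).order + 6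
      = ((5 * m : ℕ) : ℕ∞) + (C a * X ^ (2 * m) * (C a + y₁) ^ 2 - y₁).order := by
  set E : R⟦X⟧ := C a * X ^ (2 * m) * (C a + y₁) ^ 2 - y₁ with hE
  set y : R⟦X⟧ := X ^ (2 * m) * (C a + y₁) with hy
  have hm₀ : m ≠ 0 := Nat.one_le_iff_ne_zero.1 hm
  have hcircle : circleForm a 0 (-1) 0 (X ^ m) y = X ^ (2 * m) * E := by
    simp only [circleForm, algebraMap_eq, map_zero, map_neg, map_one, hy, hE]
    ring
  have horder : (circleForm a 0 (-1) 0 (X ^ m) y).order = ((2 * m : ℕ) : ℕ∞) + E.order := by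
    rw [hcircle, order_mul, order_X_pow]
  have hlt : ((2 * m : ℕ) : ℕ∞) < ((2 * m : ℕ) : ℕ∞) + E.order := by
    have hE₀ : E.order ≠ 0 := order_ne_zero_iff_constCoeff_eq_zero.2 (by simp [hE, hy₁, hm₀])
    simpa using (ENat.add_lt_add_iff_left (ENat.natCast_ne_top (2 * m))).2 (pos_of_ne_zero hE₀)
  have hmlt : (m : ℕ∞) < ((2 * m : ℕ) : ℕ∞) := Nat.cast_lt.2 (by lia)
  have hylt : m < y.order := by
    rw [hy, order_mul, order_X_pow]
    exact hmlt.trans_le le_self_add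
  rw [order_vertexForm_add_six_eq_add_order_circleForm hm₀ (order_X_pow m) hylt
    (neg_ne_zero.2 one_ne_zero) (horder ▸ ne_bot_of_gt hlt) (horder ▸ (hmlt.trans hlt).ne')
    (horder ▸ hlt.ne'), horder, ← add_assoc, ← Nat.cast_add]
  congr 2
  ring

end Order

theorem vser_eq_vertexForm (x y : ℂ⟦X⟧) : vser x y = vertexForm (derivative ℂ) x y := by
  simp only [vser, D, vertexForm, arcThirdDeriv]
  ring

/-- **Theorem 2.6(3), exceptional case `n = 2m`.** For the parametrised curve
`γ(t) = (t^m, t^(2m)(a + y₁(t)))` with `a ≠ 0` and `y₁(0) = 0`, setting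
`E = a·t^(2m)·(a + y₁)² − y₁ ≠ 0`, the order of the vertex series satisfies
`V_γ = 3m + 2m + ord E − 6`, i.e. `ord v + 6 = 5m + ord E`. -/
theorem order_vertex_series_exceptional (m : ℕ) (hm : 1 ≤ m) (a : ℂ) (ha : a ≠ 0)
    (y₁ : PowerSeries ℂ) (hy₁ : constantCoeff y₁ = 0)
    (E : PowerSeries ℂ)
    (hE : E = C a * (X : PowerSeries ℂ) ^ (2 * m) * (C a + y₁) ^ 2 - y₁)
    (hE0 : E ≠ 0) :
    (vser ((X : PowerSeries ℂ) ^ m)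
        ((X : PowerSeries ℂ) ^ (2 * m) * (C a + y₁))).order + 6
      = ((5 * m : ℕ) : ℕ∞) + E.order := by
  rw [vser_eq_vertexForm, hE, order_vertex_series_exceptional_general hm a y₁ hy₁]
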